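/- Let a > √3, Δt, Δx > 0, λ = Δt/Δx, and τ > 0. Let M_L⁻, M_L⁺, M_R⁻, M_R⁺ ∈ ℝ⁵ each be of two-node Gaussian-EQMOM form (positive weights, σ > 0), with interface speeds δ_L± and δ_R± and HLL fluxes F̂_L, F̂_R as in the HLL construction, and cell average M̄ = ½(M_L⁺ + M_R⁻). Let S denote the BGK source, and suppose μ > 0 is such that H₂(M_L⁺ + μ S(M_L⁺)) and H₂(M_R⁻ + μ S(M_R⁻)) are positive semidefinite. Define M_new = M̄ − λ(F̂_R − F̂_L) + (Δt/2)(S(M_L⁺) + S(M_R⁻)). If λ(δ_L⁺ − δ_L⁻) + Δt/μ < ½ and λ(δ_R⁺ − δ_R⁻) + Δt/μ < ½, then H₂(M_new) is positive definite. -/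

import Mathlib

open MeasureTheory Real

/-- The `k`-th moment `Δ_k(v, s²)` of the normal distribution with mean `v` and variance `s²`. -/
noncomputable def gaussMoment (v s : ℝ) (k : ℕ) : ℝ :=
  ∫ x : ℝ, x ^ k * ((2 * π * s ^ 2) ^ (-(1 : ℝ) / 2) * Real.exp (-(x - v) ^ 2 / (2 * s ^ 2)))

/-- The `3×3` Hankel matrix `H₂(c)` of a vector `c ∈ ℝ⁵`, with `(j,k)` entry `c_{j+k}`. -/
noncomputable def hankel2 (c : Fin 5 → ℝ) : Matrix (Fin 3) (Fin 3) ℝ :=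
  Matrix.of fun j k => c ⟨j.1 + k.1, by have := j.isLt; have := k.isLt; omega⟩

/-- Parameters of a two-node Gaussian-EQMOM state: positive weights and positive `σ`. -/
structure EqmomParams where
  r1 : ℝ
  r2 : ℝ
  v1 : ℝ
  v2 : ℝ
  sig : ℝ
  hr1 : 0 < r1
  hr2 : 0 < r2
  hsig : 0 < sig

/-- Moment vector `M_k = ρ₁Δ_k(v₁,σ²) + ρ₂Δ_k(v₂,σ²)`, `k = 0,…,4`. -/
noncomputable def EqmomParams.M (W : EqmomParams) : Fin 5 → ℝ :=
  fun k => W.r1 * gaussMoment W.v1 W.sig k.1 + W.r2 * gaussMoment W.v2 W.sig k.1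

/-- Flux vector `F(M) = (M₁,…,M₄,M₅)` with `M₅ = ρ₁Δ₅(v₁,σ²) + ρ₂Δ₅(v₂,σ²)`. -/
noncomputable def EqmomParams.F (W : EqmomParams) : Fin 5 → ℝ :=
  fun k => W.r1 * gaussMoment W.v1 W.sig (k.1 + 1) + W.r2 * gaussMoment W.v2 W.sig (k.1 + 1)

/-- Wave speed `δ⁺(M) = max{v₁+aσ, v₂+aσ, 0}`. -/
noncomputable def EqmomParams.dp (W : EqmomParams) (a : ℝ) : ℝ :=
  max (max (W.v1 + a * W.sig) (W.v2 + a * W.sig)) 0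

/-- Wave speed `δ⁻(M) = min{v₁−aσ, v₂−aσ, 0}`. -/
noncomputable def EqmomParams.dm (W : EqmomParams) (a : ℝ) : ℝ :=
  min (min (W.v1 - a * W.sig) (W.v2 - a * W.sig)) 0

/-- HLL numerical flux
`F̂(M⁻,M⁺) = (δ̂⁺F(M⁻) − δ̂⁻F(M⁺) + δ̂⁺δ̂⁻(M⁺ − M⁻))/(δ̂⁺ − δ̂⁻)`. -/
noncomputable def hllFlux (dp dm : ℝ) (Mm Mp Fm Fp : Fin 5 → ℝ) : Fin 5 → ℝ :=
  fun k => (dp * Fm k - dm * Fp k + dp * dm * (Mp k - Mm k)) / (dp - dm)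

/-- BGK source `S(M) = (0,0,0,(ρΔ₃(U,θ) − M₃)/τ, (ρΔ₄(U,θ) − M₄)/τ)` with `ρ = M₀`,
`U = M₁/M₀`, `θ = M₂/M₀ − U²`. -/
noncomputable def bgkSource (τ : ℝ) (M : Fin 5 → ℝ) : Fin 5 → ℝ :=
  ![0, 0, 0,
    (M 0 * ((M 1 / M 0) ^ 3 + 3 * (M 1 / M 0) * (M 2 / M 0 - (M 1 / M 0) ^ 2)) - M 3) / τ,
    (M 0 * ((M 1 / M 0) ^ 4 + 6 * (M 1 / M 0) ^ 2 * (M 2 / M 0 - (M 1 / M 0) ^ 2)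
        + 3 * (M 2 / M 0 - (M 1 / M 0) ^ 2) ^ 2) - M 4) / τ]

/-!
Three-point Gauss–Hermite quadrature is exact up to degree five, so the moments of a normal
distribution entering `M` and `F(M)` are those of a positive discrete measure with the three nodes
`v - √3 σ`, `v`, `v + √3 σ`. Congruence by the Vandermonde matrix of the nodes turns statements on
Hankel matrices into statements on weights: `H₂(M)` is positive definite, and since `√3 ≤ a` puts
the nodes between the wave speeds, `δ⁻ H₂(M) ≤ H₂(F(M)) ≤ δ⁺ H₂(M)` in the Loewner order.
The HLL flux inherits the one-sided bounds `δ⁻ H₂(M⁺) ≤ H₂(F̂) ≤ δ⁺ H₂(M⁻)`. Hence each half of the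
cell update is a positive multiple of its state, plus nonnegative multiples of a flux defect such as
`δ⁺ H₂(M) - H₂(F̂)` and of the relaxed state `H₂(M + μ S)`.
-/

open ProbabilityTheory
open scoped NNReal MatrixOrder

section GaussianMoments

variable (m : ℝ) (v : ℝ≥0)

theorem deriv_mgf_id_gaussianReal :
    deriv (mgf id (gaussianReal m v)) = fun t => (m + v * t) * mgf id (gaussianReal m v) t := by
  ext t
  have hexponent : HasDerivAt (fun t : ℝ => m * t + v * t ^ 2 / 2) (m + v * t) t := by
    refine (((hasDerivAt_id' t).const_mul m).fun_add
      (((hasDerivAt_pow 2 t).const_mul (v : ℝ)).div_const 2)).congr_deriv ?_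
    norm_num
    ring
  rw [mgf_id_gaussianReal, hexponent.exp.deriv, mul_comm]

theorem iteratedDeriv_mgf_id_gaussianReal_zero (k : ℕ) :
    iteratedDeriv k (mgf id (gaussianReal m v)) 0 = ∫ x, x ^ k ∂gaussianReal m v :=
  iteratedDeriv_mgf_zero (by simp [integrableExpSet_id_gaussianReal]) k

-- Leibniz' rule for `mgf' t = (m + v t) mgf t`; for `k = 0` the truncated `k - 1` has factor `0`.
theorem integral_pow_succ_gaussianReal (k : ℕ) :
    ∫ x, x ^ (k + 1) ∂gaussianReal m v =
      m * ∫ x, x ^ k ∂gaussianReal m v + k * v * ∫ x, x ^ (k - 1) ∂gaussianReal m v := by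
  have hmgf : ContDiff ℝ k (mgf id (gaussianReal m v)) := by
    rw [mgf_id_gaussianReal]
    fun_prop
  have hslope : deriv (fun t : ℝ => m + v * t) = fun _ => (v : ℝ) := by
    ext t
    simp
  simp_rw [← iteratedDeriv_mgf_id_gaussianReal_zero]
  rw [iteratedDeriv_succ', deriv_mgf_id_gaussianReal,
    iteratedDeriv_fun_mul (by fun_prop) hmgf.contDiffAt]
  cases k with
  | zero => simp
  | succ k =>
    rw [Finset.sum_range_succ', Finset.sum_range_succ']
    simp [iteratedDeriv_succ', hslope, iteratedDeriv_const]
    ring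

end GaussianMoments

theorem gaussMoment_eq_integral_gaussianReal (v : ℝ) {s : ℝ} (hs : s ≠ 0) (k : ℕ) :
    gaussMoment v s k = ∫ x, x ^ k ∂gaussianReal v (s ^ 2).toNNReal := by
  have hvar : (s ^ 2).toNNReal ≠ 0 := by
    simpa using hs
  rw [integral_gaussianReal_eq_integral_smul hvar, gaussMoment]
  congr with x
  rw [gaussianPDFReal_def, neg_div, rpow_neg (by positivity), ← sqrt_eq_rpow, smul_eq_mul, mul_comm,
    coe_toNNReal _ (sq_nonneg s)]

theorem gaussMoment_zero (v : ℝ) {s : ℝ} (hs : s ≠ 0) : gaussMoment v s 0 = 1 := by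
  simp [gaussMoment_eq_integral_gaussianReal v hs]

theorem gaussMoment_succ (v : ℝ) {s : ℝ} (hs : s ≠ 0) (k : ℕ) :
    gaussMoment v s (k + 1) = v * gaussMoment v s k + k * s ^ 2 * gaussMoment v s (k - 1) := by
  have hrec := integral_pow_succ_gaussianReal v (s ^ 2).toNNReal k
  rw [coe_toNNReal _ (sq_nonneg s)] at hrec
  simpa only [gaussMoment_eq_integral_gaussianReal v hs] using hrec

/-- The nodes of the three-point Gauss–Hermite quadrature of the normal distribution with mean `v`
and standard deviation `s`: the zeros of `He₃(x) = x³ - 3x`, transported by `x ↦ v + s x`. -/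
noncomputable def hermiteNode (v s : ℝ) : Fin 3 → ℝ :=
  ![v - √3 * s, v, v + √3 * s]

/-- The weights of the three-point Gauss–Hermite quadrature, normalised to total mass one. -/
noncomputable def hermiteWeight : Fin 3 → ℝ :=
  ![1 / 6, 2 / 3, 1 / 6]

theorem hermiteWeight_pos (i : Fin 3) : 0 < hermiteWeight i := by
  fin_cases i <;> norm_num [hermiteWeight]

theorem hermiteNode_strictMono (v : ℝ) {s : ℝ} (hs : 0 < s) : StrictMono (hermiteNode v s) := by
  have hgap : 0 < √3 * s := by positivity
  rw [Fin.strictMono_iff_lt_succ]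
  intro i
  fin_cases i <;> simpa [hermiteNode] using hgap

theorem gaussMoment_eq_sum_hermite (v : ℝ) {s : ℝ} (hs : s ≠ 0) {k : ℕ} (hk : k ≤ 5) :
    gaussMoment v s k = ∑ i, hermiteWeight i * hermiteNode v s i ^ k := by
  have h3 : √3 ^ 2 = 3 := sq_sqrt (by norm_num)
  interval_cases k <;>
    simp [gaussMoment_succ v hs, gaussMoment_zero v hs, Fin.sum_univ_three, hermiteWeight,
      hermiteNode] <;> grind

section DiscreteMoments

open Matrix

variable {ι : Type*} [Fintype ι]

/-- The moments of order `0, …, 4` of the discrete measure `∑ i, w i δ_{x i}`; the weights `w i` may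
have any sign. -/
def discreteMoment (w x : ι → ℝ) : Fin 5 → ℝ :=
  fun k => ∑ i, w i * x i ^ k.1

theorem hankel2_discreteMoment [DecidableEq ι] (w x : ι → ℝ) :
    hankel2 (discreteMoment w x) =
      (rectVandermonde x 1 3)ᴴ * diagonal w * rectVandermonde x 1 3 := by
  ext j k
  rw [Matrix.mul_apply]
  simp only [hankel2, discreteMoment, of_apply, mul_diagonal, conjTranspose_apply,
    rectVandermonde_apply, Pi.one_apply, one_pow, mul_one, star_trivial, pow_add]
  exact Finset.sum_congr rfl fun i _ => by ring

theorem smul_hankel2_discreteMoment (d : ℝ) (w x : ι → ℝ) :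
    d • hankel2 (discreteMoment w x) = hankel2 (discreteMoment (d • w) x) := by
  classical
  rw [hankel2_discreteMoment, hankel2_discreteMoment, diagonal_smul, Matrix.mul_smul,
    Matrix.smul_mul]

theorem hankel2_discreteMoment_mono {w w' : ι → ℝ} (hw : w ≤ w') (x : ι → ℝ) :
    hankel2 (discreteMoment w x) ≤ hankel2 (discreteMoment w' x) := by
  classical
  rw [Matrix.le_iff, hankel2_discreteMoment, hankel2_discreteMoment, ← Matrix.sub_mul,
    ← Matrix.mul_sub, diagonal_sub]
  exact (PosSemidef.diagonal (sub_nonneg.2 hw)).conjTranspose_mul_mul_same _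

theorem posDef_hankel2_discreteMoment {w x : Fin 3 → ℝ} (hw : ∀ i, 0 < w i)
    (hx : Function.Injective x) : (hankel2 (discreteMoment w x)).PosDef := by
  have hV : rectVandermonde x 1 3 = vandermonde x := (vandermonde_eq_projVandermonde x).symm
  rw [hankel2_discreteMoment, hV]
  refine (PosDef.diagonal hw).conjTranspose_mul_mul_same (mulVec_injective_of_isUnit ?_)
  rw [isUnit_iff_isUnit_det]
  exact (det_vandermonde_ne_zero_iff.2 hx).isUnit

end DiscreteMoments

section GaussianHankel

variable (v : ℝ) {s d : ℝ}

theorem gaussMoment_eq_discreteMoment (hs : s ≠ 0) :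
    (fun k : Fin 5 => gaussMoment v s k) = discreteMoment hermiteWeight (hermiteNode v s) :=
  funext fun k => gaussMoment_eq_sum_hermite v hs (by omega)

theorem gaussMoment_succ_eq_discreteMoment (hs : s ≠ 0) :
    (fun k : Fin 5 => gaussMoment v s (k + 1)) =
      discreteMoment (hermiteNode v s * hermiteWeight) (hermiteNode v s) := by
  ext k
  rw [gaussMoment_eq_sum_hermite v hs (by omega), discreteMoment]
  exact Finset.sum_congr rfl fun i _ => by rw [Pi.mul_apply]; ring

theorem posDef_hankel2_gaussMoment (hs : 0 < s) :
    (hankel2 (fun k => gaussMoment v s k)).PosDef := by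
  rw [gaussMoment_eq_discreteMoment v hs.ne']
  exact posDef_hankel2_discreteMoment hermiteWeight_pos (hermiteNode_strictMono v hs).injective

theorem hankel2_gaussMoment_succ_le (hs : 0 < s) (hd : v + √3 * s ≤ d) :
    hankel2 (fun k => gaussMoment v s (k + 1)) ≤ d • hankel2 (fun k => gaussMoment v s k) := by
  rw [gaussMoment_eq_discreteMoment v hs.ne', gaussMoment_succ_eq_discreteMoment v hs.ne',
    smul_hankel2_discreteMoment]
  refine hankel2_discreteMoment_mono (fun i => ?_) _
  have hnode : hermiteNode v s i ≤ d :=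
    ((hermiteNode_strictMono v hs).monotone (Fin.le_last i)).trans hd
  exact mul_le_mul_of_nonneg_right hnode (hermiteWeight_pos i).le

theorem smul_hankel2_gaussMoment_le (hs : 0 < s) (hd : d ≤ v - √3 * s) :
    d • hankel2 (fun k => gaussMoment v s k) ≤ hankel2 (fun k => gaussMoment v s (k + 1)) := by
  rw [gaussMoment_eq_discreteMoment v hs.ne', gaussMoment_succ_eq_discreteMoment v hs.ne',
    smul_hankel2_discreteMoment]
  refine hankel2_discreteMoment_mono (fun i => ?_) _
  have hnode : d ≤ hermiteNode v s i :=
    hd.trans ((hermiteNode_strictMono v hs).monotone (Fin.zero_le i))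
  exact mul_le_mul_of_nonneg_right hnode (hermiteWeight_pos i).le

end GaussianHankel

namespace EqmomParams

variable (W : EqmomParams) {a d : ℝ}

theorem hankel2_M : hankel2 W.M =
    W.r1 • hankel2 (fun k => gaussMoment W.v1 W.sig k) +
      W.r2 • hankel2 (fun k => gaussMoment W.v2 W.sig k) :=
  rfl

theorem hankel2_F : hankel2 W.F =
    W.r1 • hankel2 (fun k => gaussMoment W.v1 W.sig (k + 1)) +
      W.r2 • hankel2 (fun k => gaussMoment W.v2 W.sig (k + 1)) :=
  rfl

theorem posDef_hankel2_M : (hankel2 W.M).PosDef :=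
  ((posDef_hankel2_gaussMoment W.v1 W.hsig).smul W.hr1).add
    ((posDef_hankel2_gaussMoment W.v2 W.hsig).smul W.hr2)

variable {W}

theorem hankel2_F_le (ha : √3 ≤ a) (hd : W.dp a ≤ d) : hankel2 W.F ≤ d • hankel2 W.M := by
  have hr1 := W.hr1.le
  have hr2 := W.hr2.le
  have hsig : √3 * W.sig ≤ a * W.sig := mul_le_mul_of_nonneg_right ha W.hsig.le
  simp only [dp, max_le_iff] at hd
  rw [hankel2_M, hankel2_F, smul_add, smul_comm d, smul_comm d]
  gcongr
  · exact hankel2_gaussMoment_succ_le _ W.hsig (by linarith)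
  · exact hankel2_gaussMoment_succ_le _ W.hsig (by linarith)

theorem smul_hankel2_M_le (ha : √3 ≤ a) (hd : d ≤ W.dm a) : d • hankel2 W.M ≤ hankel2 W.F := by
  have hr1 := W.hr1.le
  have hr2 := W.hr2.le
  have hsig : √3 * W.sig ≤ a * W.sig := mul_le_mul_of_nonneg_right ha W.hsig.le
  simp only [dm, le_min_iff] at hd
  rw [hankel2_M, hankel2_F, smul_add, smul_comm d, smul_comm d]
  gcongr
  · exact smul_hankel2_gaussMoment_le _ W.hsig (by linarith)
  · exact smul_hankel2_gaussMoment_le _ W.hsig (by linarith)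

variable (W a)

theorem dp_nonneg : 0 ≤ W.dp a :=
  le_max_right _ _

theorem dm_nonpos : W.dm a ≤ 0 :=
  min_le_right _ _

variable {a}

theorem dm_lt_dp (ha : 0 < a) : W.dm a < W.dp a := by
  have h : 0 < a * W.sig := mul_pos ha W.hsig
  have hdp : W.v1 + a * W.sig ≤ W.dp a := (le_max_left _ _).trans (le_max_left _ _)
  have hdm : W.dm a ≤ W.v1 - a * W.sig := (min_le_left _ _).trans (min_le_left _ _)
  linarith

end EqmomParams

section HLL

variable {𝕜 E : Type*} [Field 𝕜] [LinearOrder 𝕜] [IsStrictOrderedRing 𝕜]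
  [AddCommGroup E] [PartialOrder E] [IsOrderedAddMonoid E] [Module 𝕜 E] [PosSMulMono 𝕜 E]
  {dp dm : 𝕜} {Mm Mp Fm Fp : E}

theorem hll_le_smul (hdp : 0 ≤ dp) (hdm : dm ≤ 0) (hlt : dm < dp)
    (hFm : Fm ≤ dp • Mm) (hFp : Fp ≤ dp • Mp) :
    (dp - dm)⁻¹ • (dp • Fm - dm • Fp + (dp * dm) • (Mp - Mm)) ≤ dp • Mm := by
  have hdm' : 0 ≤ -dm := neg_nonneg.2 hdm
  rw [inv_smul_le_iff_of_pos (sub_pos.2 hlt)]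
  calc dp • Fm - dm • Fp + (dp * dm) • (Mp - Mm)
      = dp • Fm + -dm • Fp + (dp * dm) • (Mp - Mm) := by module
    _ ≤ dp • dp • Mm + -dm • dp • Mp + (dp * dm) • (Mp - Mm) := by gcongr
    _ = (dp - dm) • dp • Mm := by module

theorem smul_le_hll (hdp : 0 ≤ dp) (hdm : dm ≤ 0) (hlt : dm < dp)
    (hFm : dm • Mm ≤ Fm) (hFp : dm • Mp ≤ Fp) :
    dm • Mp ≤ (dp - dm)⁻¹ • (dp • Fm - dm • Fp + (dp * dm) • (Mp - Mm)) := by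
  have hdm' : 0 ≤ -dm := neg_nonneg.2 hdm
  rw [le_inv_smul_iff_of_pos (sub_pos.2 hlt)]
  calc (dp - dm) • dm • Mp
      = dp • dm • Mm + -dm • dm • Mp + (dp * dm) • (Mp - Mm) := by module
    _ ≤ dp • Fm + -dm • Fp + (dp * dm) • (Mp - Mm) := by gcongr
    _ = dp • Fm - dm • Fp + (dp * dm) • (Mp - Mm) := by module

end HLL

theorem hankel2_hllFlux (dp dm : ℝ) (Mm Mp Fm Fp : Fin 5 → ℝ) :
    hankel2 (hllFlux dp dm Mm Mp Fm Fp) =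
      (dp - dm)⁻¹ • (dp • hankel2 Fm - dm • hankel2 Fp +
        (dp * dm) • (hankel2 Mp - hankel2 Mm)) := by
  ext j k
  simp only [hankel2, hllFlux, Matrix.of_apply, Matrix.smul_apply, Matrix.add_apply,
    Matrix.sub_apply, smul_eq_mul]
  rw [div_eq_inv_mul]

theorem hankel2_hllFlux_le (Wm Wp : EqmomParams) {a dp dm : ℝ} (ha : √3 ≤ a)
    (hdp : max (Wm.dp a) (Wp.dp a) ≤ dp) (hdm : dm ≤ min (Wm.dm a) (Wp.dm a)) :
    hankel2 (hllFlux dp dm Wm.M Wp.M Wm.F Wp.F) ≤ dp • hankel2 Wm.M := by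
  rw [max_le_iff] at hdp
  rw [le_min_iff] at hdm
  have ha_pos : 0 < a := lt_of_lt_of_le (by positivity) ha
  rw [hankel2_hllFlux]
  exact hll_le_smul ((Wm.dp_nonneg a).trans hdp.1) (hdm.1.trans (Wm.dm_nonpos a))
    (hdm.1.trans_lt ((Wm.dm_lt_dp ha_pos).trans_le hdp.1))
    (EqmomParams.hankel2_F_le ha hdp.1) (EqmomParams.hankel2_F_le ha hdp.2)

theorem smul_hankel2_le_hllFlux (Wm Wp : EqmomParams) {a dp dm : ℝ} (ha : √3 ≤ a)
    (hdp : max (Wm.dp a) (Wp.dp a) ≤ dp) (hdm : dm ≤ min (Wm.dm a) (Wp.dm a)) :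
    dm • hankel2 Wp.M ≤ hankel2 (hllFlux dp dm Wm.M Wp.M Wm.F Wp.F) := by
  rw [max_le_iff] at hdp
  rw [le_min_iff] at hdm
  have ha_pos : 0 < a := lt_of_lt_of_le (by positivity) ha
  rw [hankel2_hllFlux]
  exact smul_le_hll ((Wm.dp_nonneg a).trans hdp.1) (hdm.1.trans (Wm.dm_nonpos a))
    (hdm.1.trans_lt ((Wm.dm_lt_dp ha_pos).trans_le hdp.1))
    (EqmomParams.smul_hankel2_M_le ha hdm.1) (EqmomParams.smul_hankel2_M_le ha hdm.2)

open scoped ComplexOrder in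
theorem posDef_halfCell_update {𝕜 n : Type*} [RCLike 𝕜] {M F S : Matrix n n 𝕜} {d lam Δt μ : ℝ}
    (hM : M.PosDef) (hF : F ≤ d • M) (hS : (M + μ • S).PosSemidef)
    (hlam : 0 ≤ lam) (hΔt : 0 ≤ Δt) (hμ : 0 < μ) (hCFL : lam * d + Δt / (2 * μ) < 1 / 2) :
    ((1 / 2 : ℝ) • M - lam • F + (Δt / 2) • S).PosDef := by
  have hsource : Δt / 2 = Δt / (2 * μ) * μ := by field_simp
  have hsplit : (1 / 2 : ℝ) • M - lam • F + (Δt / 2) • S =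
      (1 / 2 - (lam * d + Δt / (2 * μ))) • M + lam • (d • M - F) +
        (Δt / (2 * μ)) • (M + μ • S) := by
    rw [hsource]
    module
  rw [hsplit]
  exact ((hM.smul (sub_pos.2 hCFL)).add_posSemidef ((Matrix.le_iff.1 hF).smul hlam)).add_posSemidef
    (hS.smul (by positivity))

theorem hankel2_add_mul (c : ℝ) (M S : Fin 5 → ℝ) :
    hankel2 (fun k => M k + c * S k) = hankel2 M + c • hankel2 S :=
  rfl

theorem hankel2_cellUpdate (lam Δt : ℝ) (ML MR FL FR SL SR : Fin 5 → ℝ) :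
    hankel2 (fun k => (ML k + MR k) / 2 - lam * (FR k - FL k) + Δt / 2 * (SL k + SR k)) =
      ((1 / 2 : ℝ) • hankel2 ML - lam • -hankel2 FL + (Δt / 2) • hankel2 SL) +
        ((1 / 2 : ℝ) • hankel2 MR - lam • hankel2 FR + (Δt / 2) • hankel2 SR) := by
  ext j k
  simp only [hankel2, Matrix.of_apply, Matrix.smul_apply, Matrix.add_apply,
    Matrix.sub_apply, Matrix.neg_apply, smul_eq_mul]
  ring

theorem eqmom_hll_bgk_update_posDef_general {a Δt lam μ : ℝ}
    (ha : √3 ≤ a) (hΔt : 0 ≤ Δt) (hlam : 0 ≤ lam) (hμ : 0 < μ)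
    (WLm WLp WRm WRp : EqmomParams) {dLp dLm dRp dRm : ℝ}
    (hdLp : max (WLm.dp a) (WLp.dp a) ≤ dLp) (hdLm : dLm ≤ min (WLm.dm a) (WLp.dm a))
    (hdRp : max (WRm.dp a) (WRp.dp a) ≤ dRp) (hdRm : dRm ≤ min (WRm.dm a) (WRp.dm a))
    (SL SR : Fin 5 → ℝ)
    (hrealL : (hankel2 (fun k => WLp.M k + μ * SL k)).PosSemidef)
    (hrealR : (hankel2 (fun k => WRm.M k + μ * SR k)).PosSemidef)
    (hCFL_L : lam * -dLm + Δt / (2 * μ) < 1 / 2) (hCFL_R : lam * dRp + Δt / (2 * μ) < 1 / 2) :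
    (hankel2 (fun k => (WLp.M k + WRm.M k) / 2 -
      lam * (hllFlux dRp dRm WRm.M WRp.M WRm.F WRp.F k -
        hllFlux dLp dLm WLm.M WLp.M WLm.F WLp.F k) + Δt / 2 * (SL k + SR k))).PosDef := by
  have hFL := smul_hankel2_le_hllFlux WLm WLp ha hdLp hdLm
  have hFR := hankel2_hllFlux_le WRm WRp ha hdRp hdRm
  rw [← neg_le_neg_iff, ← neg_smul] at hFL
  rw [hankel2_add_mul] at hrealL hrealR
  have hL := posDef_halfCell_update WLp.posDef_hankel2_M hFL hrealL hlam hΔt hμ hCFL_L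
  have hR := posDef_halfCell_update WRm.posDef_hankel2_M hFR hrealR hlam hΔt hμ hCFL_R
  rw [hankel2_cellUpdate]
  exact hL.add hR
/-- realizability of the explicit-BGK HLL finite-volume update for the two-node
Gaussian-EQMOM closure.  If `μ > 0` keeps `H₂(M_L⁺ + μS(M_L⁺))` and `H₂(M_R⁻ + μS(M_R⁻))`
positive semidefinite, and `λ(δ⁺ − δ⁻) + Δt/μ < 1/2` at both interfaces (`λ = Δt/Δx`), then
`H₂(M_new)` is positive definite, where
`M_new = ½(M_L⁺ + M_R⁻) − λ(F̂_R − F̂_L) + (Δt/2)(S(M_L⁺) + S(M_R⁻))`. -/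
theorem eqmom_hll_bgk_update_posDef (a Δt Δx lam τ μ : ℝ)
    (ha : Real.sqrt 3 < a) (hΔt : 0 < Δt) (hΔx : 0 < Δx) (hlam : lam = Δt / Δx)
    (hτ : 0 < τ) (hμ : 0 < μ)
    (WLm WLp WRm WRp : EqmomParams)
    (dLp dLm dRp dRm : ℝ)
    (hdLp : dLp = max (WLm.dp a) (WLp.dp a))
    (hdLm : dLm = min (WLm.dm a) (WLp.dm a))
    (hdRp : dRp = max (WRm.dp a) (WRp.dp a))
    (hdRm : dRm = min (WRm.dm a) (WRp.dm a))
    (FL FR : Fin 5 → ℝ)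
    (hFL : FL = hllFlux dLp dLm WLm.M WLp.M WLm.F WLp.F)
    (hFR : FR = hllFlux dRp dRm WRm.M WRp.M WRm.F WRp.F)
    (hrealL : (hankel2 (fun k => WLp.M k + μ * bgkSource τ WLp.M k)).PosSemidef)
    (hrealR : (hankel2 (fun k => WRm.M k + μ * bgkSource τ WRm.M k)).PosSemidef)
    (hCFL_L : lam * (dLp - dLm) + Δt / μ < 1 / 2)
    (hCFL_R : lam * (dRp - dRm) + Δt / μ < 1 / 2) :
    (hankel2 (fun k => (WLp.M k + WRm.M k) / 2 - lam * (FR k - FL k)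
        + Δt / 2 * (bgkSource τ WLp.M k + bgkSource τ WRm.M k))).PosDef := by
  subst hlam hFL hFR
  have hlam : 0 ≤ Δt / Δx := by positivity
  have hratio : 0 ≤ Δt / μ := by positivity
  have hhalf : Δt / (2 * μ) = Δt / μ / 2 := by ring
  have hp : 0 ≤ dLp := hdLp ▸ (WLm.dp_nonneg a).trans (le_max_left _ _)
  have hm : dRm ≤ 0 := hdRm ▸ (min_le_left _ _).trans (WRm.dm_nonpos a)
  exact eqmom_hll_bgk_update_posDef_general ha.le hΔt.le hlam hμ WLm WLp WRm WRp
    hdLp.ge hdLm.le hdRp.ge hdRm.le _ _ hrealL hrealR (by nlinarith) (by nlinarith)
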